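/- Let n ≥ 1 and let T be a nonzero state reachable from ₀(n) by Bergman moves in which every entry is 0 or 1. Let i₀ be the least index with T i₀ = 1, and suppose that (i₀ : ℝ) ≤ −L for some real L ≥ log_φ n + 3. Set z = ⌊(L − log_φ n − 3)/2⌋. Then T(i₀ + 1) = 1, and for every integer j with 1 ≤ j ≤ z one has T(i₀ + 2j − 1) = 1 and T(i₀ + 2j) = 0; that is, the left edge of T has the form 110101…10 with z zeros, and moreover each such index i₀ + 2j is negative. -/

import Mathlib

noncomputable section

/-- The golden ratio. -/
def phi : ℝ := (1 + Real.sqrt 5) / 2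

/-- Base-φ logarithm. -/
def logphi (x : ℝ) : ℝ := Real.logb phi x

/-- A Bergman state: a finitely supported function from ℤ to ℕ. -/
abbrev BState := ℤ →₀ ℕ

/-- A split move at index `i`. -/
def SplitAt (S S' : BState) (i : ℤ) : Prop :=
  2 ≤ S i ∧
    S' = S - Finsupp.single i 2 + Finsupp.single (i + 1) 1 + Finsupp.single (i - 2) 1

/-- A combine move at index `i`. -/
def CombineAt (S S' : BState) (i : ℤ) : Prop :=
  1 ≤ S i ∧ 1 ≤ S (i + 1) ∧
    S' = S - Finsupp.single i 1 - Finsupp.single (i + 1) 1 + Finsupp.single (i + 2) 1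

/-- A move is a split or a combine. -/
def Move (S S' : BState) : Prop := (∃ i, SplitAt S S' i) ∨ (∃ i, CombineAt S S' i)

/-- Terminal state: no move is legal. -/
def Terminal (S : BState) : Prop :=
  (∀ i, S i ≤ 1) ∧ ∀ i, ¬(1 ≤ S i ∧ 1 ≤ S (i + 1))

/-- A Bergman game of length `m` from `S`. -/
def Game (S : BState) (m : ℕ) (g : ℕ → BState) : Prop :=
  g 0 = S ∧ ∀ j < m, Move (g j) (g (j + 1))

/-- A complete Bergman game of length `m` from `S`. -/
def CompleteGame (S : BState) (m : ℕ) (g : ℕ → BState) : Prop :=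
  Game S m g ∧ Terminal (g m)

/-- Reachability by a finite sequence of moves. -/
def Reachable : BState → BState → Prop := Relation.ReflTransGen Move

/-- Reachability by split moves only. -/
def SplitReachable : BState → BState → Prop :=
  Relation.ReflTransGen fun S S' => ∃ i, SplitAt S S' i

/-- The initial state `₀(n)`: `n` chips at index 0. -/
def initState (n : ℕ) : BState := Finsupp.single 0 n

/-- Total number of chips in a state. -/
def chips (S : BState) : ℕ := S.sum fun _ c => c

open Classical in
/-- The number of split moves among the first `m` steps of `g`. -/
def splitCount (g : ℕ → BState) (m : ℕ) : ℕ :=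
  ((Finset.range m).filter fun j => ∃ i, SplitAt (g j) (g (j + 1)) i).card

open Classical in
/-- The number of combine moves among the first `m` steps of `g`. -/
def combineCount (g : ℕ → BState) (m : ℕ) : ℕ :=
  ((Finset.range m).filter fun j => ∃ i, CombineAt (g j) (g (j + 1)) i).card

/-!
Both moves preserve `∑ T i * ψ ^ i`, where `ψ = -φ⁻¹` is the conjugate of `φ`, so this sum is `n`.
Among all sums `∑ c k * ψ ^ k` over `k ≥ 0` with `c k ∈ {0, 1}`, the least is `-1`, attained by
choosing exactly the odd `k`, and a wrong choice at `k` costs `φ ^ (-k)`. Reading `T` from its least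
index `i₀`, the term `k = 0` is always a wrong choice, of cost `1`; a further wrong choice at
`i = i₀ + k` therefore forces `φ ^ (-k) ≤ |ψ ^ (-i₀) * n| = φ ^ i₀ * n`, that is,
`-i ≤ log_φ n`. Hence below `-log_φ n` there is none, and the digits alternate.
-/

open Finset
open scoped goldenRatio

section SubsetSums

variable {ι : Type*} {f : ι → ℝ} {c : ι → ℕ} {v w : ℝ}

lemma natCast_mul_add_negPart_nonneg {a : ℕ} (ha : a ≤ 1) (x : ℝ) : 0 ≤ a * x + x⁻ := by
  interval_cases a
  · simp
  · simpa using neg_le_iff_add_nonneg'.1 (neg_le_negPart x)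

lemma ite_neg_mul_add_negPart (x : ℝ) :
    ((if x < 0 then 0 else 1 : ℕ) : ℝ) * x + x⁻ = |x| := by
  split_ifs with hx
  · simp [negPart_eq_neg.2 hx.le, abs_of_neg hx]
  · simp [negPart_eq_zero.2 (not_lt.1 hx), abs_of_nonneg (not_lt.1 hx)]

/- The least subset sum is `-w`, attained by selecting the negative terms; `s` consists of indices
where the selection `c` is the opposite one. -/
lemma sum_abs_le_add_of_hasSum (hc : ∀ i, c i ≤ 1) (hv : HasSum (fun i ↦ c i * f i) v)
    (hw : HasSum (fun i ↦ (f i)⁻) w) (s : Finset ι)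
    (hs : ∀ i ∈ s, c i = if f i < 0 then 0 else 1) : ∑ i ∈ s, |f i| ≤ v + w :=
  calc ∑ i ∈ s, |f i| = ∑ i ∈ s, (c i * f i + (f i)⁻) :=
        sum_congr rfl fun i hi ↦ by rw [hs i hi, ite_neg_mul_add_negPart]
    _ ≤ v + w :=
        sum_le_hasSum s (fun i _ ↦ natCast_mul_add_negPart_nonneg (hc i) (f i)) (hv.add hw)

end SubsetSums

lemma pow_neg_iff_odd_of_neg {r : ℝ} (hr : r < 0) {k : ℕ} : r ^ k < 0 ↔ Odd k := by
  refine ⟨fun hk ↦ Nat.not_even_iff_odd.1 fun heven ↦ ?_, fun hk ↦ hk.pow_neg hr⟩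
  exact hk.not_ge (heven.pow_nonneg r)

lemma hasSum_negPart_pow {r : ℝ} (hr : -1 < r) (hr₀ : r < 0) :
    HasSum (fun k : ℕ ↦ (r ^ k)⁻) (-r * (1 - r ^ 2)⁻¹) := by
  have even_terms : HasSum (fun k : ℕ ↦ (r ^ (2 * k))⁻) 0 := by
    have term_eq (k : ℕ) : (r ^ (2 * k))⁻ = 0 :=
      negPart_eq_zero.2 ((even_two_mul k).pow_nonneg r)
    simpa only [term_eq] using hasSum_zero
  have odd_terms : HasSum (fun k : ℕ ↦ (r ^ (2 * k + 1))⁻) (-r * (1 - r ^ 2)⁻¹) := by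
    have sq_lt_one : |r ^ 2| < 1 := by
      rw [abs_pow, sq_lt_one_iff_abs_lt_one, abs_abs, abs_lt]
      exact ⟨hr, hr₀.trans one_pos⟩
    have term_eq (k : ℕ) : (r ^ (2 * k + 1))⁻ = -r * (r ^ 2) ^ k := by
      rw [negPart_eq_neg.2 ((odd_two_mul_add_one k).pow_neg hr₀).le]
      ring
    simpa only [term_eq] using (hasSum_geometric_of_abs_lt_one sq_lt_one).mul_left (-r)
  simpa only [zero_add] using HasSum.even_add_odd (f := fun k ↦ (r ^ k)⁻) even_terms odd_terms

section GoldenConj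

lemma phi_eq_goldenRatio : phi = φ := rfl

lemma abs_goldenConj : |ψ| = φ⁻¹ := by
  rw [abs_of_neg Real.goldenConj_neg, Real.inv_goldenRatio]

lemma hasSum_negPart_goldenConj_pow : HasSum (fun k : ℕ ↦ (ψ ^ k)⁻) 1 := by
  have geometric_value : -ψ * (1 - ψ ^ 2)⁻¹ = 1 := by
    rw [Real.goldenConj_sq, sub_add_cancel_right]
    exact mul_inv_cancel₀ (neg_ne_zero.2 Real.goldenConj_ne_zero)
  exact geometric_value ▸ hasSum_negPart_pow Real.neg_one_lt_goldenConj Real.goldenConj_neg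

lemma eq_ite_odd_of_hasSum_goldenConj_pow {c : ℕ → ℕ} {v : ℝ} (hc : ∀ k, c k ≤ 1)
    (hc₀ : c 0 = 1) (hv : HasSum (fun k ↦ c k * ψ ^ k) v) {k : ℕ} (hk : k ≠ 0)
    (hvk : v < φ⁻¹ ^ k) : c k = if Odd k then 1 else 0 := by
  by_contra hck
  have wrong_choice : c k = if ψ ^ k < 0 then 0 else 1 := by
    have := hc k
    simp only [pow_neg_iff_odd_of_neg Real.goldenConj_neg]
    split_ifs at hck ⊢ <;> omega
  have excess : ∑ j ∈ {0, k}, |ψ ^ j| ≤ v + 1 := by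
    refine sum_abs_le_add_of_hasSum hc hv hasSum_negPart_goldenConj_pow _ fun j hj ↦ ?_
    rcases mem_insert.1 hj with rfl | hj
    · simp [hc₀]
    · rwa [mem_singleton.1 hj]
  rw [sum_pair hk.symm, pow_zero, abs_one, abs_pow, abs_goldenConj] at excess
  linarith

end GoldenConj

section EvalAt

variable {K : Type*} [Field K] {x : K} {S S' : BState} {i : ℤ}

/-- The value `∑ i, S i * x ^ i` of a state when a chip at index `i` is worth `x ^ i`; it is an
invariant of the game when `x` is `φ` or its conjugate. -/
def evalAt (x : K) : BState →ₗ[ℕ] K := Finsupp.linearCombination ℕ fun i : ℤ ↦ x ^ i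

lemma evalAt_single (x : K) (i : ℤ) (c : ℕ) : evalAt x (Finsupp.single i c) = c * x ^ i := by
  rw [evalAt, Finsupp.linearCombination_single, nsmul_eq_mul]

lemma ne_zero_of_sq_eq_add_one (hx : x ^ 2 = x + 1) : x ≠ 0 := by
  rintro rfl
  simp at hx

lemma SplitAt.evalAt_eq (hx : x ^ 2 = x + 1) (h : SplitAt S S' i) :
    evalAt x S' = evalAt x S := by
  obtain ⟨hi, rfl⟩ := h
  obtain ⟨R, rfl⟩ := exists_add_of_le (Finsupp.single_le_iff.2 hi)
  have hx₀ := ne_zero_of_sq_eq_add_one hx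
  simp only [add_tsub_cancel_left, map_add, evalAt_single, zpow_add₀ hx₀, zpow_sub₀ hx₀]
  field_simp
  push_cast
  linear_combination x ^ i * (x - 1) * hx

lemma CombineAt.evalAt_eq (hx : x ^ 2 = x + 1) (h : CombineAt S S' i) :
    evalAt x S' = evalAt x S := by
  obtain ⟨hi, hi', rfl⟩ := h
  obtain ⟨R, rfl⟩ := exists_add_of_le (Finsupp.single_le_iff.2 hi)
  have hR : 1 ≤ R (i + 1) := by simpa using hi'
  obtain ⟨Q, rfl⟩ := exists_add_of_le (Finsupp.single_le_iff.2 hR)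
  simp only [add_tsub_cancel_left, map_add, evalAt_single,
    zpow_add₀ (ne_zero_of_sq_eq_add_one hx), zpow_ofNat]
  push_cast
  linear_combination x ^ i * hx

lemma Reachable.evalAt_eq (hx : x ^ 2 = x + 1) (h : Reachable S S') :
    evalAt x S' = evalAt x S := by
  induction h with
  | refl => rfl
  | tail _ hmove ih =>
    rcases hmove with ⟨i, hsplit⟩ | ⟨i, hcombine⟩
    · rw [hsplit.evalAt_eq hx, ih]
    · rw [hcombine.evalAt_eq hx, ih]

lemma hasSum_evalAt [TopologicalSpace K] (x : K) (S : BState) :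
    HasSum (fun i ↦ S i * x ^ i) (evalAt x S) := by
  rw [evalAt, Finsupp.linearCombination_apply, Finsupp.sum]
  simp only [nsmul_eq_mul]
  refine hasSum_sum_of_ne_finset_zero fun i hi ↦ ?_
  rw [Finsupp.notMem_support_iff.1 hi, Nat.cast_zero, zero_mul]

lemma hasSum_evalAt_shift [TopologicalSpace K] [IsTopologicalRing K] (hx : x ≠ 0) {i₀ : ℤ}
    (hleast : ∀ j < i₀, S j = 0) :
    HasSum (fun k : ℕ ↦ S (i₀ + k) * x ^ k) (x ^ (-i₀) * evalAt x S) := by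
  have shift_injective : Function.Injective fun k : ℕ ↦ i₀ + k :=
    (add_right_injective i₀).comp Nat.cast_injective
  have shifted := (hasSum_evalAt x S).mul_left (x ^ (-i₀))
  rw [← shift_injective.hasSum_iff] at shifted
  · refine shifted.congr_fun fun k ↦ ?_
    rw [Function.comp_apply, mul_left_comm, ← zpow_add₀ hx, neg_add_cancel_left, zpow_natCast]
  · intro i hi
    have hlt : i < i₀ := not_le.1 fun hle ↦ hi ⟨(i - i₀).toNat, by grind⟩
    rw [hleast i hlt, Nat.cast_zero, zero_mul, mul_zero]

end EvalAt

section LeftEdge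

variable {T : BState} {i₀ i : ℤ}

lemma eq_ite_odd_of_abs_evalAt_lt (h01 : ∀ i, T i ≤ 1) (hi₀ : T i₀ = 1)
    (hleast : ∀ j < i₀, T j = 0) (hi : i₀ < i) (hlt : |evalAt ψ T| < φ ^ (-i)) :
    T i = if Odd (i - i₀) then 1 else 0 := by
  obtain ⟨k, rfl⟩ := Int.le.dest hi.le
  have shifted_lt : ψ ^ (-i₀) * evalAt ψ T < φ⁻¹ ^ k :=
    calc ψ ^ (-i₀) * evalAt ψ T ≤ |ψ ^ (-i₀) * evalAt ψ T| := le_abs_self _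
      _ = φ ^ i₀ * |evalAt ψ T| := by
        rw [abs_mul, abs_zpow, abs_goldenConj, inv_zpow', neg_neg]
      _ < φ ^ i₀ * φ ^ (-(i₀ + k)) :=
        mul_lt_mul_of_pos_left hlt (zpow_pos Real.goldenRatio_pos i₀)
      _ = φ⁻¹ ^ k := by
        rw [← zpow_add₀ Real.goldenRatio_ne_zero, neg_add, add_neg_cancel_left, zpow_neg,
          zpow_natCast, inv_pow]
  rw [eq_ite_odd_of_hasSum_goldenConj_pow (c := fun k ↦ T (i₀ + k)) (fun _ ↦ h01 _) (by simpa)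
    (hasSum_evalAt_shift Real.goldenConj_ne_zero hleast) (by omega) shifted_lt]
  simp only [add_sub_cancel_left, Int.odd_coe_nat]

lemma logphi_natCast_nonneg (n : ℕ) : 0 ≤ logphi n := by
  rw [logphi, phi_eq_goldenRatio]
  rcases n.eq_zero_or_pos with rfl | hn
  · simp
  · exact Real.logb_nonneg Real.one_lt_goldenRatio (Nat.one_le_cast.2 hn)

lemma Reachable.eq_ite_odd_of_logphi_lt {n : ℕ} (hn : 0 < n) (hT : Reachable (initState n) T)
    (h01 : ∀ i, T i ≤ 1) (hi₀ : T i₀ = 1) (hleast : ∀ j < i₀, T j = 0) (hi : i₀ < i)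
    (hlog : logphi n < -i) : T i = if Odd (i - i₀) then 1 else 0 := by
  have conj_value : evalAt ψ T = n := by
    rw [hT.evalAt_eq Real.goldenConj_sq, initState, evalAt_single, zpow_zero, mul_one]
  refine eq_ite_odd_of_abs_evalAt_lt h01 hi₀ hleast hi ?_
  rw [conj_value, Nat.abs_cast, ← Real.rpow_intCast, Int.cast_neg]
  rwa [logphi, phi_eq_goldenRatio,
    Real.logb_lt_iff_lt_rpow Real.one_lt_goldenRatio (Nat.cast_pos.2 hn)] at hlog

end LeftEdge

/-- If `T` is a nonzero 0-1 state reachable from `₀(n)` whose least occupied index `i₀`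
satisfies `i₀ ≤ −L` with `L ≥ log_φ n + 3`, and `z = ⌊(L − log_φ n − 3)/2⌋`, then the left
edge of `T` has the form `110101…10` with `z` zeros, each such zero at a negative index. -/
theorem bergman_left_edge_zeros (n : ℕ) (hn : 1 ≤ n)
    (T : BState) (hT : Reachable (initState n) T) (hT0 : T ≠ 0)
    (h01 : ∀ i, T i ≤ 1)
    (i₀ : ℤ) (hi₀ : T i₀ = 1) (hleast : ∀ j < i₀, T j = 0)
    (L : ℝ) (hL : logphi n + 3 ≤ L) (hpos : (i₀ : ℝ) ≤ -L)
    (z : ℤ) (hz : z = ⌊(L - logphi n - 3) / 2⌋) :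
    T (i₀ + 1) = 1 ∧
      ∀ j : ℤ, 1 ≤ j → j ≤ z →
        T (i₀ + 2 * j - 1) = 1 ∧ T (i₀ + 2 * j) = 0 ∧ i₀ + 2 * j < 0 := by
  have hlog : 0 ≤ logphi n := logphi_natCast_nonneg n
  have digit (i : ℤ) (hi : i₀ < i) (hiL : (i - i₀ : ℝ) < L - logphi n) :
      T i = if Odd (i - i₀) then 1 else 0 :=
    hT.eq_ite_odd_of_logphi_lt hn h01 hi₀ hleast hi (by linarith)
  refine ⟨?_, fun j hj hjz ↦ ?_⟩
  · rw [digit (i₀ + 1) (by omega) (by push_cast; linarith), if_pos (by simp)]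
  have hjL : (j : ℝ) ≤ (L - logphi n - 3) / 2 := Int.le_floor.1 (hz ▸ hjz)
  refine ⟨?_, ?_, ?_⟩
  · rw [digit (i₀ + 2 * j - 1) (by omega) (by push_cast; linarith), if_pos (by grind)]
  · rw [digit (i₀ + 2 * j) (by omega) (by push_cast; linarith), if_neg (by simp)]
  · rify
    linarith
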